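/- Let G = (A, B, E) be a bipartite graph, let k be a nonnegative integer, and let T_1, …, T_p be the twin classes of G. For every i, let T_i' be a subset of T_i with T_i' = T_i if |T_i| ≤ k+1 and |T_i'| = k+1 otherwise. Then G has an A-partitioning cover of cost at most k if and only if the induced subgraph G[T_1' ∪ … ∪ T_p'] has an A-partitioning cover (with respect to its side A ∩ (T_1' ∪ … ∪ T_p')) of cost at most k. -/

import Mathlib

/- Common framework: bipartite graphs on vertex set `ℕ` with side labels,
   edge editions, vertex splittings, and the bicluster-editing numbers. -/

namespace BCE

/-- A graph on a finite subset of `ℕ` equipped with a labelling of its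
vertices into two sides `A` and `B`. -/
structure BGraph where
  A : Set ℕ
  B : Set ℕ
  finA : A.Finite
  finB : B.Finite
  Adj : ℕ → ℕ → Prop
  symm : ∀ u v, Adj u v → Adj v u

/-- The vertex set of a graph. -/
def verts (G : BGraph) : Set ℕ := G.A ∪ G.B

/-- The open neighbourhood of a vertex. -/
def nbhd (G : BGraph) (v : ℕ) : Set ℕ := {u | G.Adj v u}

/-- `G = (A, B, E)` is bipartite: the sides are disjoint and every edge joins
a vertex of `A` with a vertex of `B`. -/
def Bipartite (G : BGraph) : Prop :=
  Disjoint G.A G.B ∧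
    ∀ u v, G.Adj u v → (u ∈ G.A ∧ v ∈ G.B) ∨ (u ∈ G.B ∧ v ∈ G.A)

/-- A (bipartite) graph is a disjoint union of bicliques iff whenever
`a-b-c-d` is a walk, `a` and `d` are adjacent (equivalently, every connected
component is a complete bipartite graph). -/
def IsBicliqueUnion (G : BGraph) : Prop :=
  ∀ a b c d, G.Adj a b → G.Adj b c → G.Adj c d → G.Adj a d

/-- The editing operations: deletion of an edge, addition of an edge, and
splitting of a vertex `v` into `v` and a fresh vertex `v'` whose
neighbourhoods `N1`, `N2` cover the neighbourhood of `v`. -/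
inductive Op where
  | del : ℕ → ℕ → Op
  | add : ℕ → ℕ → Op
  | split : ℕ → ℕ → Set ℕ → Set ℕ → Op

/-- `op` is a vertex splitting. -/
def IsSplitOp : Op → Prop
  | Op.split _ _ _ _ => True
  | _ => False

/-- `OpStep sA sB op G G'` : performing the single operation `op` on `G`
yields `G'`; vertex splittings are allowed on side `A` (resp. `B`) only if
`sA` (resp. `sB`) is `true`.  A copy created by a splitting is put on the
same side as the split vertex. -/
inductive OpStep (sA sB : Bool) : Op → BGraph → BGraph → Prop where
  | del {G G' : BGraph} {u v : ℕ}
      (h : G.Adj u v) (hA : G'.A = G.A) (hB : G'.B = G.B)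
      (hadj : ∀ x y, G'.Adj x y ↔
        (G.Adj x y ∧ ¬((x = u ∧ y = v) ∨ (x = v ∧ y = u)))) :
      OpStep sA sB (Op.del u v) G G'
  | add {G G' : BGraph} {u v : ℕ}
      (hu : u ∈ G.A) (hv : v ∈ G.B) (h : ¬ G.Adj u v)
      (hA : G'.A = G.A) (hB : G'.B = G.B)
      (hadj : ∀ x y, G'.Adj x y ↔
        (G.Adj x y ∨ (x = u ∧ y = v) ∨ (x = v ∧ y = u))) :
      OpStep sA sB (Op.add u v) G G'
  | split {G G' : BGraph} {v v' : ℕ} {N1 N2 : Set ℕ}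
      (hside : (v ∈ G.A ∧ sA = true) ∨ (v ∈ G.B ∧ sB = true))
      (hfresh : v' ∉ verts G)
      (hcover : N1 ∪ N2 = nbhd G v)
      (hA : v ∈ G.A → G'.A = insert v' G.A ∧ G'.B = G.B)
      (hB : v ∈ G.B → G'.A = G.A ∧ G'.B = insert v' G.B)
      (hadj : ∀ x y, G'.Adj x y ↔
        ((G.Adj x y ∧ x ≠ v ∧ y ≠ v) ∨ (x = v ∧ y ∈ N1) ∨ (y = v ∧ x ∈ N1) ∨
          (x = v' ∧ y ∈ N2) ∨ (y = v' ∧ x ∈ N2))) :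
      OpStep sA sB (Op.split v v' N1 N2) G G'

/-- `ApplySeq sA sB L G G'` : applying the sequence of operations `L`
to `G` yields `G'`. -/
def ApplySeq (sA sB : Bool) : List Op → BGraph → BGraph → Prop
  | [], G, G' => G' = G
  | op :: L, G, G'' => ∃ G', OpStep sA sB op G G' ∧ ApplySeq sA sB L G' G''

/-- The sequence `L` transforms `G` into a disjoint union of bicliques. -/
def Solves (sA sB : Bool) (L : List Op) (G : BGraph) : Prop :=
  ∃ G', ApplySeq sA sB L G G' ∧ IsBicliqueUnion G'

/-- `bcevs G` : the minimum length of a sequence of edge editions and vertex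
splittings transforming `G` into a disjoint union of bicliques. -/
noncomputable def bcevs (G : BGraph) : ℕ :=
  sInf {n | ∃ L, L.length = n ∧ Solves true true L G}

/-- `bceovs G` (that is, `bceovs(G, A)`) : the minimum length of such a
sequence in which vertex splittings are applied only to vertices of the side
`A` (and their copies, which are also on side `A`). -/
noncomputable def bceovs (G : BGraph) : ℕ :=
  sInf {n | ∃ L, L.length = n ∧ Solves true false L G}

/-- The subgraph of `G` induced by `S`. -/
def induce (G : BGraph) (S : Set ℕ) : BGraph where
  A := G.A ∩ S
  B := G.B ∩ S
  finA := G.finA.subset Set.inter_subset_left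
  finB := G.finB.subset Set.inter_subset_left
  Adj := fun u v => G.Adj u v ∧ u ∈ S ∧ v ∈ S
  symm := fun u v h => ⟨G.symm u v h.1, h.2.2, h.2.1⟩

/-- `G` is a tree (as an abstract graph on its vertex set). -/
def IsTreeB (G : BGraph) : Prop :=
  (SimpleGraph.induce (verts G) (SimpleGraph.fromRel G.Adj)).IsTree

/-- `G` is connected. -/
def ConnectedB (G : BGraph) : Prop :=
  (SimpleGraph.induce (verts G) (SimpleGraph.fromRel G.Adj)).Connected

/-- The set `S` induces a biclique in `G`: every vertex of `S` on side `A` is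
adjacent to every vertex of `S` on side `B`. -/
def IsBicliqueOn (G : BGraph) (S : Set ℕ) : Prop :=
  ∀ u ∈ S ∩ G.A, ∀ v ∈ S ∩ G.B, G.Adj u v

/-- The set `S` induces a star in `G`: some centre `c ∈ S` is adjacent to all
other vertices of `S`, and every edge inside `S` uses the centre. -/
def IsStarOn (G : BGraph) (S : Set ℕ) : Prop :=
  ∃ c ∈ S, (∀ v ∈ S, v ≠ c → G.Adj c v) ∧
    (∀ u ∈ S, ∀ v ∈ S, G.Adj u v → u = c ∨ v = c)

/-- An `A`-partitioning cover of `G`: a collection of subsets of `A ∪ B`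
covering all vertices whose traces on `A` form a partition of `A` (every
vertex of `A` lies in a unique member of the collection). -/
def IsAPartCover (G : BGraph) (C : Set (Set ℕ)) : Prop :=
  (∀ X ∈ C, X ⊆ verts G) ∧
  (∀ v ∈ verts G, ∃ X ∈ C, v ∈ X) ∧
  (∀ a ∈ G.A, ∃! X, X ∈ C ∧ a ∈ X)

/-- The cost of an `A`-partitioning cover: each `a ∈ A` lying in the unique
set `X ∈ C` costs `|(B ∩ X) \ N(a)| + |N(a) \ X|`; each `b ∈ B` lying in `j`
members of `C` costs `j - 1`. -/
noncomputable def coverCost (G : BGraph) (C : Set (Set ℕ)) : ℕ :=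
  (∑ᶠ a ∈ G.A, ∑ᶠ X ∈ {X ∈ C | a ∈ X},
      (((G.B ∩ X) \ nbhd G a).ncard + ((nbhd G a) \ X).ncard)) +
  ∑ᶠ b ∈ G.B, ({X ∈ C | b ∈ X}.ncard - 1)

/-- The twin class of a vertex: all vertices of `G` with the same open
neighbourhood. -/
def twinClass (G : BGraph) (v : ℕ) : Set ℕ :=
  {u ∈ verts G | nbhd G u = nbhd G v}

/-- The twin classes of `G`. -/
def twinClasses (G : BGraph) : Set (Set ℕ) :=
  {T | ∃ v ∈ verts G, T = twinClass G v}

/-- A cover is twin-adapted if every member contains each twin class either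
entirely or not at all. -/
def TwinAdapted (G : BGraph) (C : Set (Set ℕ)) : Prop :=
  ∀ T ∈ twinClasses G, ∀ X ∈ C, T ∩ X = ∅ ∨ T ⊆ X

/-- `G` is a cycle with consecutive vertices `p 0, p 1, …, p (m-1)`
(indices modulo `m`), the vertices of even index forming side `A`. -/
def IsCycleWith (G : BGraph) (p : ℕ → ℕ) (m : ℕ) : Prop :=
  (∀ i j, i < m → j < m → p i = p j → i = j) ∧
  G.A = p '' {i | i < m ∧ i % 2 = 0} ∧
  G.B = p '' {i | i < m ∧ i % 2 = 1} ∧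
  (∀ x y, G.Adj x y ↔ ∃ i < m,
    (x = p i ∧ y = p ((i + 1) % m)) ∨ (y = p i ∧ x = p ((i + 1) % m)))

/-- `G` is a path with `l` edges and consecutive vertices `p 0, …, p l`,
the vertices of even index forming side `A`. -/
def IsPathWith (G : BGraph) (p : ℕ → ℕ) (l : ℕ) : Prop :=
  (∀ i j, i ≤ l → j ≤ l → p i = p j → i = j) ∧
  G.A = p '' {i | i ≤ l ∧ i % 2 = 0} ∧
  G.B = p '' {i | i ≤ l ∧ i % 2 = 1} ∧
  (∀ x y, G.Adj x y ↔ ∃ i < l,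
    (x = p i ∧ y = p (i + 1)) ∨ (y = p i ∧ x = p (i + 1)))

end BCE

namespace BCE

/-! The cost of a cover is the number of pairs in `A × B` on which "lying in a common member"
disagrees with adjacency, plus the superfluous memberships of the vertices. Both quantities behave
well when a cover is pulled back along a map of graphs preserving sides, adjacency and
non-adjacency. Pulling back along the inclusion of an induced subgraph gives one direction. For the
other, among `k + 1` twins on the same side a cover of cost at most `k` spends nothing on some
twin; sending every removed vertex to such a cost-free twin is a retraction along which the cover
pulls back without any new cost. Removed isolated vertices become singleton members. -/

/-- Two vertices lie in a common member of `C`. For `a ∈ A` and `b ∈ B` this is adjacency in the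
graph that an `A`-partitioning cover `C` turns `G` into, up to splittings. -/
def Together (C : Set (Set ℕ)) (a b : ℕ) : Prop := ∃ X ∈ C, a ∈ X ∧ b ∈ X

/-- The edge editions forced by the cover `C`: the pairs in `A × B` whose adjacency has to be
changed. Each edition is recorded once, as a pair with its first entry in `A`. -/
def mismatches (G : BGraph) (C : Set (Set ℕ)) : Set (ℕ × ℕ) :=
  {p | p.1 ∈ G.A ∧ p.2 ∈ G.B ∧ ¬(Together C p.1 p.2 ↔ G.Adj p.1 p.2)}

/-- The number of superfluous memberships of `v` in `C`, that is, the number of times `v` has to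
be split; it is `0` when no member of `C` contains `v`. -/
noncomputable def excess (C : Set (Set ℕ)) (v : ℕ) : ℕ := {X ∈ C | v ∈ X}.ncard - 1

/-- The cover `C` spends nothing on the vertex `v`: it forces no edge edition at `v` and no
splitting of `v`. -/
def FreeAt (G : BGraph) (C : Set (Set ℕ)) (v : ℕ) : Prop :=
  (∀ p ∈ mismatches G C, p.1 ≠ v ∧ p.2 ≠ v) ∧ excess C v = 0

/-- A full homomorphism `G → H` of bipartite graphs: a map of vertices that preserves the two
sides and both preserves and reflects adjacency between them. -/
structure IsFullHom (G H : BGraph) (ρ : ℕ → ℕ) : Prop where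
  mapsTo_left : Set.MapsTo ρ G.A H.A
  mapsTo_right : Set.MapsTo ρ G.B H.B
  adj_iff : ∀ a ∈ G.A, ∀ b ∈ G.B, (H.Adj (ρ a) (ρ b) ↔ G.Adj a b)

/-- The pullback to `G` of a collection `C` of vertex sets along `ρ`, used to transport covers.
Preimages are cut down to the vertices of `G`, since `ρ` is defined on all of `ℕ`. -/
def pullback (G : BGraph) (ρ : ℕ → ℕ) (C : Set (Set ℕ)) : Set (Set ℕ) :=
  (fun X => verts G ∩ ρ ⁻¹' X) '' C

theorem ncard_support_le_finsum {α : Type*} {f : α → ℕ} (hf : f.support.Finite) :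
    f.support.ncard ≤ ∑ᶠ x, f x := by
  rw [← finsum_mem_univ f, ← finsum_mem_inter_support, Set.univ_inter, ← finsum_one,
    finsum_mem_eq_finite_toFinset_sum _ hf, finsum_mem_eq_finite_toFinset_sum _ hf]
  exact Finset.sum_le_sum fun x hx => Nat.one_le_iff_ne_zero.mpr (hf.mem_toFinset.mp hx)

section BipartiteGraph

variable {G : BGraph}

theorem verts_finite (G : BGraph) : (verts G).Finite := G.finA.union G.finB

theorem verts_induce (G : BGraph) (S : Set ℕ) : verts (induce G S) = verts G ∩ S :=
  (Set.union_inter_distrib_right G.A G.B S).symm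

theorem adj_comm (G : BGraph) (u v : ℕ) : G.Adj u v ↔ G.Adj v u := ⟨G.symm u v, G.symm v u⟩

theorem Bipartite.mem_left_iff (h : Bipartite G) {u v : ℕ} (huv : G.Adj u v) :
    u ∈ G.A ↔ v ∈ G.B := by
  rcases h.2 u v huv with ⟨hu, hv⟩ | ⟨hu, hv⟩
  · exact iff_of_true hu hv
  · exact iff_of_false (Set.disjoint_right.mp h.1 hu) (Set.disjoint_left.mp h.1 hv)

theorem Bipartite.mem_verts (h : Bipartite G) {u v : ℕ} (huv : G.Adj u v) : u ∈ verts G :=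
  (h.2 u v huv).imp And.left And.left

theorem Bipartite.nbhd_subset (h : Bipartite G) {a : ℕ} (ha : a ∈ G.A) : nbhd G a ⊆ G.B :=
  fun _ hb => (h.mem_left_iff hb).mp ha

protected theorem Bipartite.induce (h : Bipartite G) (S : Set ℕ) : Bipartite (induce G S) := by
  refine ⟨h.1.mono Set.inter_subset_left Set.inter_subset_left, ?_⟩
  rintro u v ⟨huv, hu, hv⟩
  exact (h.2 u v huv).imp (fun ⟨huA, hvB⟩ => ⟨⟨huA, hu⟩, hvB, hv⟩)
    (fun ⟨huB, hvA⟩ => ⟨⟨huB, hu⟩, hvA, hv⟩)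

theorem Bipartite.mem_left_iff_of_nbhd_eq (h : Bipartite G) {u v : ℕ}
    (huv : nbhd G u = nbhd G v) (hne : (nbhd G v).Nonempty) : u ∈ G.A ↔ v ∈ G.A := by
  obtain ⟨w, hvw⟩ := hne
  have huw : G.Adj u w := huv.ge hvw
  rw [h.mem_left_iff huw, h.mem_left_iff hvw]

theorem Bipartite.mem_right_iff_of_nbhd_eq (h : Bipartite G) {u v : ℕ}
    (huv : nbhd G u = nbhd G v) (hne : (nbhd G v).Nonempty) : u ∈ G.B ↔ v ∈ G.B := by
  obtain ⟨w, hvw⟩ := hne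
  have huw : G.Adj u w := huv.ge hvw
  rw [← h.mem_left_iff (G.symm _ _ huw), ← h.mem_left_iff (G.symm _ _ hvw)]

theorem adj_iff_of_nbhd_eq {a a' b b' : ℕ} (ha : nbhd G a' = nbhd G a)
    (hb : nbhd G b' = nbhd G b) : G.Adj a' b' ↔ G.Adj a b :=
  calc G.Adj a' b' ↔ G.Adj a b' := Set.ext_iff.mp ha b'
    _ ↔ G.Adj b' a := adj_comm G a b'
    _ ↔ G.Adj b a := Set.ext_iff.mp hb a
    _ ↔ G.Adj a b := adj_comm G b a

end BipartiteGraph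

section Cost

variable {G H : BGraph} {C D : Set (Set ℕ)}

theorem IsAPartCover.finite (hC : IsAPartCover G C) : C.Finite :=
  (verts_finite G).finite_subsets.subset hC.1

theorem mismatches_finite (G : BGraph) (C : Set (Set ℕ)) : (mismatches G C).Finite :=
  (G.finA.prod G.finB).subset fun _ hp => ⟨hp.1, hp.2.1⟩

theorem excess_eq_zero_of_subsingleton {v : ℕ} (h : {X ∈ C | v ∈ X}.Subsingleton) :
    excess C v = 0 :=
  Nat.sub_eq_zero_of_le ((Set.ncard_le_one h.finite).mpr fun _ hX _ hY => h hX hY)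

theorem IsAPartCover.excess_eq_zero (hC : IsAPartCover G C) {v : ℕ} (hv : v ∉ G.B) :
    excess C v = 0 := by
  refine excess_eq_zero_of_subsingleton fun X hX Y hY => ?_
  have hvA : v ∈ G.A := (hC.1 X hX.1 hX.2).resolve_right hv
  exact (hC.2.2 v hvA).unique hX hY

theorem IsAPartCover.support_excess_subset (hC : IsAPartCover G C) :
    Function.support (excess C) ⊆ G.B :=
  fun _ hv => not_not.mp fun hvB => hv (hC.excess_eq_zero hvB)

theorem excess_le_excess_of_subset_image (hC : C.Finite) {u v : ℕ} (f : Set ℕ → Set ℕ)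
    (h : {X ∈ D | v ∈ X} ⊆ f '' {X ∈ C | u ∈ X}) : excess D v ≤ excess C u := by
  have hfin : {X ∈ C | u ∈ X}.Finite := hC.subset (Set.sep_subset C _)
  exact Nat.sub_le_sub_right ((Set.ncard_le_ncard h (hfin.image f)).trans
    (Set.ncard_image_le hfin)) 1

theorem IsAPartCover.finsum_cost_eq_ncard (hbip : Bipartite G) (hC : IsAPartCover G C) {a : ℕ}
    (ha : a ∈ G.A) :
    ∑ᶠ X ∈ {X ∈ C | a ∈ X}, (((G.B ∩ X) \ nbhd G a).ncard + (nbhd G a \ X).ncard) =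
      {b | (a, b) ∈ mismatches G C}.ncard := by
  obtain ⟨X, hX, huniq⟩ := hC.2.2 a ha
  have hsing : {Y ∈ C | a ∈ Y} = {X} := Set.eq_singleton_iff_unique_mem.mpr ⟨hX, huniq⟩
  have htog (b : ℕ) : Together C a b ↔ b ∈ X :=
    ⟨fun ⟨Y, hY, haY, hbY⟩ => huniq Y ⟨hY, haY⟩ ▸ hbY, fun hb => ⟨X, hX.1, hX.2, hb⟩⟩
  have hN : nbhd G a ⊆ G.B := hbip.nbhd_subset ha
  have hdisj : Disjoint ((G.B ∩ X) \ nbhd G a) (nbhd G a \ X) :=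
    Set.disjoint_left.mpr fun _ hb hb' => hb.2 hb'.1
  rw [hsing, finsum_mem_singleton, ← Set.ncard_union_eq hdisj
    (G.finB.subset fun _ hb => hb.1.1) (G.finB.subset fun _ hb => hN hb.1)]
  congr 1
  ext b
  have hNb : G.Adj a b → b ∈ G.B := fun hb => hN hb
  simp only [mismatches, htog, nbhd, Set.mem_union, Set.mem_sdiff, Set.mem_inter_iff,
    Set.mem_ofPred_eq]
  tauto

theorem ncard_mismatches (G : BGraph) (C : Set (Set ℕ)) :
    (mismatches G C).ncard = ∑ᶠ a ∈ G.A, {b | (a, b) ∈ mismatches G C}.ncard := by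
  have hunion : mismatches G C = ⋃ a ∈ G.A, Prod.mk a '' {b | (a, b) ∈ mismatches G C} := by
    ext ⟨a, b⟩
    simp only [Set.mem_iUnion, Set.mem_image, Set.mem_ofPred_eq, Prod.mk.injEq]
    exact ⟨fun h => ⟨a, h.1, b, h, rfl, rfl⟩, by rintro ⟨_, _, _, h, rfl, rfl⟩; exact h⟩
  have hfin (a : ℕ) : {b | (a, b) ∈ mismatches G C}.Finite := G.finB.subset fun _ hb => hb.2.1
  have hdisj : G.A.PairwiseDisjoint fun a => Prod.mk a '' {b | (a, b) ∈ mismatches G C} := by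
    refine fun a _ a' _ hne => Set.disjoint_left.mpr ?_
    rintro _ ⟨b, _, rfl⟩ ⟨b', _, h⟩
    exact hne (congrArg Prod.fst h).symm
  conv_lhs => rw [hunion, G.finA.ncard_biUnion (fun a _ => (hfin a).image _) hdisj]
  exact finsum_mem_congr rfl fun a _ =>
    Set.ncard_image_of_injective _ (Prod.mk_right_injective a)

theorem IsAPartCover.coverCost_eq (hbip : Bipartite G) (hC : IsAPartCover G C) :
    coverCost G C = (mismatches G C).ncard + ∑ᶠ v, excess C v := by
  rw [coverCost, ncard_mismatches, ← finsum_mem_univ (excess C)]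
  congr 1
  · exact finsum_mem_congr rfl fun a ha => hC.finsum_cost_eq_ncard hbip ha
  · refine finsum_mem_inter_support_eq _ _ _ ?_
    exact (Set.inter_eq_right.mpr hC.support_excess_subset).trans (Set.univ_inter _).symm

theorem IsAPartCover.coverCost_le (hG : Bipartite G) (hC : IsAPartCover G C)
    (hH : Bipartite H) (hD : IsAPartCover H D) (hmis : mismatches G C ⊆ mismatches H D)
    (hexc : excess C ≤ excess D) : coverCost G C ≤ coverCost H D := by
  rw [hC.coverCost_eq hG, hD.coverCost_eq hH]
  exact add_le_add (Set.ncard_le_ncard hmis (mismatches_finite H D))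
    (finsum_le_finsum' (G.finB.subset hC.support_excess_subset)
      (H.finB.subset hD.support_excess_subset) hexc)

theorem IsAPartCover.exists_freeAt (hbip : Bipartite G) (hC : IsAPartCover G C) {U : Set ℕ}
    (hU : U ⊆ G.A ∨ U ⊆ G.B) (hcard : coverCost G C < U.ncard) : ∃ u ∈ U, FreeAt G C u := by
  by_contra! hcon
  have hcharge (u : ℕ) (hu : u ∈ U) :
      (∃ p ∈ mismatches G C, p.1 = u ∨ p.2 = u) ∨ u ∈ (excess C).support := by
    by_contra! hfree
    exact hcon u hu ⟨hfree.1, Function.notMem_support.mp hfree.2⟩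
  -- Since `U` lies on one side, a mismatch is charged to its endpoint on that side only.
  obtain ⟨f, hf⟩ : ∃ f : ℕ × ℕ → ℕ, U ⊆ f '' mismatches G C ∪ (excess C).support := by
    rcases hU with hU | hU
    · refine ⟨Prod.fst, fun u hu => (hcharge u hu).imp_left ?_⟩
      rintro ⟨p, hp, h | rfl⟩
      · exact ⟨p, hp, h⟩
      · exact absurd hp.2.1 (Set.disjoint_left.mp hbip.1 (hU hu))
    · refine ⟨Prod.snd, fun u hu => (hcharge u hu).imp_left ?_⟩
      rintro ⟨p, hp, rfl | h⟩
      · exact absurd hp.1 (Set.disjoint_right.mp hbip.1 (hU hu))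
      · exact ⟨p, hp, h⟩
  have hfinM := mismatches_finite G C
  have hfinE : (excess C).support.Finite := G.finB.subset hC.support_excess_subset
  refine hcard.not_ge ?_
  calc U.ncard ≤ (f '' mismatches G C ∪ (excess C).support).ncard :=
        Set.ncard_le_ncard hf ((hfinM.image f).union hfinE)
    _ ≤ (f '' mismatches G C).ncard + (excess C).support.ncard := Set.ncard_union_le _ _
    _ ≤ (mismatches G C).ncard + ∑ᶠ v, excess C v :=
        add_le_add (Set.ncard_image_le hfinM) (ncard_support_le_finsum hfinE)
    _ = coverCost G C := (hC.coverCost_eq hbip).symm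

end Cost

section Pullback

variable {G H : BGraph} {C : Set (Set ℕ)} {ρ : ℕ → ℕ}

theorem IsFullHom.mapsTo_verts (hρ : IsFullHom G H ρ) : Set.MapsTo ρ (verts G) (verts H) :=
  hρ.mapsTo_left.union_union hρ.mapsTo_right

protected theorem IsAPartCover.pullback (hC : IsAPartCover H C) (hρ : IsFullHom G H ρ) :
    IsAPartCover G (pullback G ρ C) := by
  refine ⟨?_, fun v hv => ?_, fun a ha => ?_⟩
  · rintro _ ⟨X, -, rfl⟩
    exact Set.inter_subset_left
  · obtain ⟨X, hX, hvX⟩ := hC.2.1 (ρ v) (hρ.mapsTo_verts hv)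
    exact ⟨_, Set.mem_image_of_mem _ hX, hv, hvX⟩
  · obtain ⟨X, ⟨hX, haX⟩, huniq⟩ := hC.2.2 (ρ a) (hρ.mapsTo_left ha)
    refine ⟨_, ⟨Set.mem_image_of_mem _ hX, Or.inl ha, haX⟩, ?_⟩
    rintro _ ⟨⟨Y, hY, rfl⟩, -, haY⟩
    rw [huniq Y ⟨hY, haY⟩]

theorem together_pullback_iff {a b : ℕ} (ha : a ∈ verts G) (hb : b ∈ verts G) :
    Together (pullback G ρ C) a b ↔ Together C (ρ a) (ρ b) := by
  simp only [Together, pullback, Set.exists_mem_image, Set.mem_inter_iff, Set.mem_preimage, ha,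
    hb, true_and]

theorem IsFullHom.map_mem_mismatches (hρ : IsFullHom G H ρ) {a b : ℕ}
    (hab : (a, b) ∈ mismatches G (pullback G ρ C)) : (ρ a, ρ b) ∈ mismatches H C := by
  obtain ⟨ha, hb, hne⟩ := hab
  rw [together_pullback_iff (Or.inl ha) (Or.inr hb), ← hρ.adj_iff a ha b hb] at hne
  exact ⟨hρ.mapsTo_left ha, hρ.mapsTo_right hb, hne⟩

theorem excess_pullback_le (hC : C.Finite) (v : ℕ) :
    excess (pullback G ρ C) v ≤ excess C (ρ v) := by
  refine excess_le_excess_of_subset_image hC (fun X => verts G ∩ ρ ⁻¹' X) ?_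
  rintro _ ⟨⟨X, hX, rfl⟩, -, hvX⟩
  exact ⟨X, ⟨hX, hvX⟩, rfl⟩

theorem IsAPartCover.coverCost_pullback_le (hG : Bipartite G) (hH : Bipartite H)
    (hC : IsAPartCover H C) (hρ : IsFullHom G H ρ)
    (hfree : ∀ v ∈ verts G, ρ v = v ∨ FreeAt H C (ρ v)) :
    coverCost G (pullback G ρ C) ≤ coverCost H C := by
  refine (hC.pullback hρ).coverCost_le hG hH hC ?_ fun v => ?_
  · rintro ⟨a, b⟩ hab
    have hmap : (ρ a, ρ b) ∈ mismatches H C := hρ.map_mem_mismatches hab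
    have ha : ρ a = a := (hfree a (Or.inl hab.1)).resolve_right fun h => (h.1 _ hmap).1 rfl
    have hb : ρ b = b := (hfree b (Or.inr hab.2.1)).resolve_right fun h => (h.1 _ hmap).2 rfl
    rwa [ha, hb] at hmap
  · by_cases hv : v ∈ verts G
    · have hle : excess (pullback G ρ C) v ≤ excess C (ρ v) := excess_pullback_le hC.finite v
      rcases hfree v hv with hfix | hfree
      · rwa [hfix] at hle
      · exact (hle.trans_eq hfree.2).trans (Nat.zero_le _)
    · rw [(hC.pullback hρ).excess_eq_zero fun hvB => hv (Or.inr hvB)]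
      exact Nat.zero_le _

end Pullback

section InducedSubgraph

variable {G : BGraph} {S : Set ℕ} {C : Set (Set ℕ)} {k : ℕ}

theorem isFullHom_id_induce (G : BGraph) (S : Set ℕ) : IsFullHom (induce G S) G id where
  mapsTo_left := Set.inter_subset_left
  mapsTo_right := Set.inter_subset_left
  adj_iff _ ha _ hb := ⟨fun h => ⟨h, ha.2, hb.2⟩, And.left⟩

theorem isFullHom_induce {W : Set ℕ} {ρ : ℕ → ℕ}
    (hA : ∀ v ∈ W, v ∈ G.A → ρ v ∈ G.A) (hB : ∀ v ∈ W, v ∈ G.B → ρ v ∈ G.B)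
    (hS : ∀ v ∈ W, ρ v ∈ S) (hnbhd : ∀ v ∈ W, nbhd G (ρ v) = nbhd G v) :
    IsFullHom (induce G W) (induce G S) ρ where
  mapsTo_left v hv := ⟨hA v hv.2 hv.1, hS v hv.2⟩
  mapsTo_right v hv := ⟨hB v hv.2 hv.1, hS v hv.2⟩
  adj_iff a ha b hb :=
    (and_iff_left ⟨hS a ha.2, hS b hb.2⟩).trans <|
      (adj_iff_of_nbhd_eq (hnbhd a ha.2) (hnbhd b hb.2)).trans
        (and_iff_left ⟨ha.2, hb.2⟩).symm

theorem IsAPartCover.mem_of_mem_induce (hC : IsAPartCover (induce G S) C) {X : Set ℕ}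
    (hX : X ∈ C) {v : ℕ} (hv : v ∈ X) : v ∈ verts G ∩ S :=
  verts_induce G S ▸ hC.1 X hX hv

theorem IsAPartCover.union_singletons (hC : IsAPartCover (induce G S) C) :
    IsAPartCover G (C ∪ singleton '' (verts G \ S)) := by
  refine ⟨?_, fun v hv => ?_, fun a ha => ?_⟩
  · rintro X (hX | ⟨w, hw, rfl⟩)
    · exact fun v hv => (hC.mem_of_mem_induce hX hv).1
    · exact Set.singleton_subset_iff.mpr hw.1
  · by_cases hvS : v ∈ S
    · obtain ⟨X, hX, hvX⟩ := hC.2.1 v ((verts_induce G S).ge ⟨hv, hvS⟩)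
      exact ⟨X, Or.inl hX, hvX⟩
    · exact ⟨{v}, Or.inr ⟨v, ⟨hv, hvS⟩, rfl⟩, rfl⟩
  · by_cases haS : a ∈ S
    · obtain ⟨X, ⟨hX, haX⟩, huniq⟩ := hC.2.2 a ⟨ha, haS⟩
      refine ⟨X, ⟨Or.inl hX, haX⟩, ?_⟩
      rintro Y ⟨hY | ⟨w, hw, rfl⟩, haY⟩
      · exact huniq Y ⟨hY, haY⟩
      · exact absurd (haY ▸ haS) hw.2
    · refine ⟨{a}, ⟨Or.inr ⟨a, ⟨Or.inl ha, haS⟩, rfl⟩, rfl⟩, ?_⟩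
      rintro Y ⟨hY | ⟨w, -, rfl⟩, haY⟩
      · exact absurd (hC.mem_of_mem_induce hY haY).2 haS
      · rw [Set.mem_singleton_iff.mp haY]

theorem together_union_singletons_iff {I : Set ℕ} {a b : ℕ} (hab : a ≠ b) :
    Together (C ∪ singleton '' I) a b ↔ Together C a b := by
  constructor
  · rintro ⟨X, hX | ⟨w, -, rfl⟩, ha, hb⟩
    · exact ⟨X, hX, ha, hb⟩
    · exact absurd (ha.trans hb.symm) hab
  · rintro ⟨X, hX, ha, hb⟩
    exact ⟨X, Or.inl hX, ha, hb⟩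

theorem IsAPartCover.excess_union_singletons_le (hC : IsAPartCover (induce G S) C) :
    excess (C ∪ singleton '' (verts G \ S)) ≤ excess C := by
  intro v
  by_cases hv : v ∈ S
  · refine excess_le_excess_of_subset_image hC.finite id ?_
    rintro X ⟨hX | ⟨w, hw, rfl⟩, hvX⟩
    · exact ⟨X, ⟨hX, hvX⟩, rfl⟩
    · exact absurd (hvX ▸ hv) hw.2
  · have hsub : {X ∈ C ∪ singleton '' (verts G \ S) | v ∈ X} ⊆ {{v}} := by
      rintro X ⟨hX | ⟨w, -, rfl⟩, hvX⟩
      · exact absurd (hC.mem_of_mem_induce hX hvX).2 hv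
      · rw [Set.mem_singleton_iff.mp hvX]; rfl
    rw [excess_eq_zero_of_subsingleton (Set.subsingleton_singleton.anti hsub)]
    exact Nat.zero_le _

theorem IsAPartCover.coverCost_union_singletons_le (hbip : Bipartite G)
    (hC : IsAPartCover (induce G S) C) (hS : ∀ v ∉ S, nbhd G v = ∅) :
    coverCost G (C ∪ singleton '' (verts G \ S)) ≤ coverCost (induce G S) C := by
  refine hC.union_singletons.coverCost_le hbip (hbip.induce S) hC ?_ hC.excess_union_singletons_le
  rintro ⟨a, b⟩ ⟨ha : a ∈ G.A, hb : b ∈ G.B, hne⟩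
  have hab : a ≠ b := fun h => Set.disjoint_left.mp hbip.1 ha (h ▸ hb)
  have hadj (h : G.Adj a b) : a ∈ S ∧ b ∈ S :=
    ⟨not_not.mp fun haS => (hS a haS).le h, not_not.mp fun hbS => (hS b hbS).le (G.symm _ _ h)⟩
  have htog : Together C a b → a ∈ S ∧ b ∈ S := fun ⟨_, hX, haX, hbX⟩ =>
    ⟨(hC.mem_of_mem_induce hX haX).2, (hC.mem_of_mem_induce hX hbX).2⟩
  rw [together_union_singletons_iff hab] at hne
  have hmem : a ∈ S ∧ b ∈ S := by tauto
  exact ⟨⟨ha, hmem.1⟩, ⟨hb, hmem.2⟩, by simpa only [induce, hmem, and_true] using hne⟩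

theorem IsAPartCover.exists_freeAt_twin (hbip : Bipartite G)
    (hC : IsAPartCover (induce G S) C) {v : ℕ} (hne : (nbhd G v).Nonempty)
    (hcard : coverCost (induce G S) C < (twinClass G v ∩ S).ncard) :
    ∃ u ∈ twinClass G v ∩ S, FreeAt (induce G S) C u := by
  refine hC.exists_freeAt (hbip.induce S) ?_ hcard
  obtain ⟨w, hw⟩ := hne
  refine (hbip.mem_verts hw).imp (fun hv u hu => ⟨?_, hu.2⟩) (fun hv u hu => ⟨?_, hu.2⟩)
  · exact (hbip.mem_left_iff_of_nbhd_eq hu.1.2 ⟨w, hw⟩).mpr hv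
  · exact (hbip.mem_right_iff_of_nbhd_eq hu.1.2 ⟨w, hw⟩).mpr hv

theorem IsAPartCover.exists_cover_induce (hbip : Bipartite G) (hC : IsAPartCover G C)
    (S : Set ℕ) :
    ∃ D, IsAPartCover (induce G S) D ∧ coverCost (induce G S) D ≤ coverCost G C :=
  have hid : IsFullHom (induce G S) G id := isFullHom_id_induce G S
  ⟨_, hC.pullback hid, hC.coverCost_pullback_le (hbip.induce S) hbip hid fun _ _ => Or.inl rfl⟩

theorem IsAPartCover.exists_cover_of_induce (hbip : Bipartite G)
    (hC : IsAPartCover (induce G S) C)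
    (htwins : ∀ v ∉ S, (nbhd G v).Nonempty →
      coverCost (induce G S) C < (twinClass G v ∩ S).ncard) :
    ∃ D, IsAPartCover G D ∧ coverCost G D ≤ coverCost (induce G S) C := by
  set W : Set ℕ := S ∪ {v | (nbhd G v).Nonempty}
  have hrep : ∀ v ∈ W, ∃ u ∈ S, (v ∈ G.A → u ∈ G.A) ∧ (v ∈ G.B → u ∈ G.B) ∧
      nbhd G u = nbhd G v ∧ (u = v ∨ FreeAt (induce G S) C u) := by
    intro v hv
    by_cases hvS : v ∈ S
    · exact ⟨v, hvS, id, id, rfl, Or.inl rfl⟩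
    · have hne : (nbhd G v).Nonempty := hv.resolve_left hvS
      obtain ⟨u, ⟨hu, huS⟩, hfree⟩ := hC.exists_freeAt_twin hbip hne (htwins v hvS hne)
      exact ⟨u, huS, (hbip.mem_left_iff_of_nbhd_eq hu.2 hne).mpr,
        (hbip.mem_right_iff_of_nbhd_eq hu.2 hne).mpr, hu.2, Or.inr hfree⟩
  choose! ρ hρS hρA hρB hρnbhd hρfree using hrep
  have hρ : IsFullHom (induce G W) (induce G S) ρ :=
    isFullHom_induce hρA hρB hρS hρnbhd
  have hisolated : ∀ v ∉ W, nbhd G v = ∅ := fun v hv =>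
    Set.not_nonempty_iff_eq_empty.mp fun hne => hv (Or.inr hne)
  have hD : IsAPartCover (induce G W) (pullback (induce G W) ρ C) := hC.pullback hρ
  refine ⟨_, hD.union_singletons, (hD.coverCost_union_singletons_le hbip hisolated).trans ?_⟩
  exact hC.coverCost_pullback_le (hbip.induce W) (hbip.induce S) hρ fun v hv =>
    hρfree v ((verts_induce G W).le hv).2

theorem le_ncard_twinClass_inter_biUnion {sel : Set ℕ → Set ℕ}
    (hsub : ∀ T ∈ twinClasses G, sel T ⊆ T)
    (hsmall : ∀ T ∈ twinClasses G, T.ncard ≤ k → sel T = T)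
    (hbig : ∀ T ∈ twinClasses G, k < T.ncard → k ≤ (sel T).ncard) {v : ℕ} (hv : v ∈ verts G)
    (hvS : v ∉ ⋃ T ∈ twinClasses G, sel T) :
    k ≤ (twinClass G v ∩ ⋃ T ∈ twinClasses G, sel T).ncard := by
  have hT : twinClass G v ∈ twinClasses G := ⟨v, hv, rfl⟩
  have hsel : sel (twinClass G v) ⊆ ⋃ T ∈ twinClasses G, sel T :=
    Set.subset_biUnion_of_mem (u := sel) hT
  have hlarge : k < (twinClass G v).ncard :=
    not_le.mp fun h => hvS (hsel ((hsmall _ hT h).ge ⟨hv, rfl⟩))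
  exact (hbig _ hT hlarge).trans (Set.ncard_le_ncard (Set.subset_inter (hsub _ hT) hsel)
    ((verts_finite G).subset fun _ hu => hu.1.1))

theorem twin_class_reduction_general (hbip : Bipartite G)
    (htwins : ∀ v ∉ S, (nbhd G v).Nonempty → k < (twinClass G v ∩ S).ncard) :
    (∃ C, IsAPartCover G C ∧ coverCost G C ≤ k) ↔
      ∃ C, IsAPartCover (induce G S) C ∧ coverCost (induce G S) C ≤ k := by
  constructor
  · rintro ⟨C, hC, hcost⟩
    obtain ⟨D, hD, hle⟩ := hC.exists_cover_induce hbip S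
    exact ⟨D, hD, hle.trans hcost⟩
  · rintro ⟨C, hC, hcost⟩
    obtain ⟨D, hD, hle⟩ := hC.exists_cover_of_induce hbip fun v hv hne =>
      hcost.trans_lt (htwins v hv hne)
    exact ⟨D, hD, hle.trans hcost⟩

end InducedSubgraph

/-- Let `G = (A, B, E)` be a bipartite graph, `k ≥ 0`, and for
every twin class `T` of `G` let `sel T ⊆ T` with `sel T = T` if `|T| ≤ k+1`
and `|sel T| = k+1` otherwise.  Then `G` has an `A`-partitioning cover of
cost at most `k` iff the subgraph induced by the union of the sets `sel T`
has one (with respect to its `A`-side). -/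
theorem twin_class_reduction (G : BGraph) (hbip : Bipartite G) (k : ℕ)
    (sel : Set ℕ → Set ℕ)
    (hsub : ∀ T ∈ twinClasses G, sel T ⊆ T)
    (hsmall : ∀ T ∈ twinClasses G, T.ncard ≤ k + 1 → sel T = T)
    (hbig : ∀ T ∈ twinClasses G, k + 1 < T.ncard → (sel T).ncard = k + 1) :
    (∃ C, IsAPartCover G C ∧ coverCost G C ≤ k) ↔
    (∃ C, IsAPartCover (induce G (⋃ T ∈ twinClasses G, sel T)) C ∧
      coverCost (induce G (⋃ T ∈ twinClasses G, sel T)) C ≤ k) := by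
  refine twin_class_reduction_general hbip fun v hv ⟨w, hw⟩ => ?_
  exact le_ncard_twinClass_inter_biUnion hsub hsmall (fun T hT h => (hbig T hT h).ge)
    (hbip.mem_verts hw) hv

end BCE
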